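/- arXiv:1501.00787 — 2 statements merged into one kernel-verified Lean document; each statement's English description precedes it below -/
import Mathlib

section
/- Let R be a ring Lie nilpotent of index n ≥ 2. Then the quotient ring R/rad(R) is commutative. -/
/-- Left-normed commutator: `lnc x [x₂,…,x_k] = [x, x₂, …, x_k]*`. -/
def lnc {R : Type*} [Ring R] (x : R) (l : List R) : R :=
  l.foldl (fun a y => a * y - y * a) x

theorem lnc_concat_aux {R : Type*} [Ring R] (x : R) (l : List R) (y : R) :
    lnc x (l ++ [y]) = lnc x l * y - y * lnc x l := by
  simp [lnc, List.foldl_append]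

theorem lnc_step_aux {R : Type*} [Ring R] (P : TwoSidedIdeal R)
    (hprime : ∀ x y : R, (∀ r : R, x * r * y ∈ P) → x ∈ P ∨ y ∈ P) (u : R)
    (hu : ∀ y z : R, (u * y - y * u) * z - z * (u * y - y * u) ∈ P) (y : R) :
    u * y - y * u ∈ P := by
  have hcc : (u * y - y * u) * (u * y - y * u) ∈ P := by
    have h := P.sub_mem (hu (y * u) y) (P.mul_mem_right _ u (hu y y))
    convert h using 1
    noncomm_ring
  have key : ∀ r : R, (u * y - y * u) * r * (u * y - y * u) ∈ P := by
    intro r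
    have h := P.add_mem (P.mul_mem_right _ (u * y - y * u) (hu y r)) (P.mul_mem_left r _ hcc)
    convert h using 1
    noncomm_ring
  exact (hprime _ _ key).elim id id

theorem lnc_descent_aux {R : Type*} [Ring R] (P : TwoSidedIdeal R)
    (hprime : ∀ x y : R, (∀ r : R, x * r * y ∈ P) → x ∈ P ∨ y ∈ P) (k : ℕ)
    (h : ∀ (x : R) (l : List R), l.length = k + 1 → lnc x l ∈ P) (a b : R) :
    a * b - b * a ∈ P := by
  induction k with
  | zero => simpa [lnc] using h a [b] rfl
  | succ k ih =>
    apply ih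
    intro x l hl
    obtain ⟨l', y, rfl⟩ : ∃ l' y, l = l' ++ [y] := by
      rcases List.eq_nil_or_concat l with h0 | ⟨l', y, h0⟩
      · simp [h0] at hl
      · exact ⟨l', y, by simpa using h0⟩
    have hl' : l'.length = k := by simpa using hl
    rw [lnc_concat_aux]
    apply lnc_step_aux P hprime
    intro y z
    rw [← lnc_concat_aux, ← lnc_concat_aux]
    exact h _ _ (by simp [hl'])

/-- `R / rad(R)` is commutative, stated as: every additive commutator lies in the
prime radical (the intersection of all prime two-sided ideals). -/
theorem quotient_by_prime_radical_commutative {R : Type*} [Ring R] (n : ℕ) (hn : 2 ≤ n)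
    (hLn : ∀ (x : R) (l : List R), l.length = n → lnc x l = 0)
    (a b : R) (P : TwoSidedIdeal R) (hP : P ≠ ⊤)
    (hprime : ∀ x y : R, (∀ r : R, x * r * y ∈ P) → x ∈ P ∨ y ∈ P) :
    a * b - b * a ∈ P := by
  obtain ⟨k, rfl⟩ : ∃ k, n = k + 1 := ⟨n - 1, by omega⟩
  exact lnc_descent_aux P hprime k (fun x l hl => by rw [hLn x l hl]; exact P.zero_mem) a b
end

section
/- Let R be a unital ring, n ≥ 1, and C ⊆ R a commutative submonoid of the multiplicative monoid of R. Then the subring S of R generated by Z_n(R) ∪ C is Lie nilpotent of index n: [x₁,…,x_{n+1}]* = 0 for all x₁,…,x_{n+1} ∈ S. -/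
/-- The n-th Lie center of `R`. -/
def lieCenter (R : Type*) [Ring R] (n : ℕ) : Set R :=
  {r : R | ∀ l : List R, l.length = n → lnc r l = 0}

/-- Lie centers as additive subgroups, defined recursively. -/
def LC (R : Type*) [Ring R] : ℕ → AddSubgroup R
  | 0 => ⊥
  | n + 1 =>
    { carrier := {r | ∀ x, r * x - x * r ∈ LC R n}
      zero_mem' := by intro x; simp
      add_mem' := by
        intro a b ha hb x
        have := add_mem (ha x) (hb x)
        convert this using 1
        noncomm_ring
      neg_mem' := by
        intro a ha x
        have := neg_mem (ha x)
        convert this using 1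
        noncomm_ring }

theorem mem_LC_succ {R : Type*} [Ring R] {n : ℕ} {r : R} :
    r ∈ LC R (n + 1) ↔ ∀ x, r * x - x * r ∈ LC R n := Iff.rfl

theorem mem_lieCenter_iff {R : Type*} [Ring R] (n : ℕ) (r : R) :
    r ∈ lieCenter R n ↔ r ∈ LC R n := by
  induction n generalizing r with
  | zero =>
    simp [lieCenter, LC, lnc]
  | succ n ih =>
    rw [mem_LC_succ]
    constructor
    · intro h x
      rw [← ih]
      intro l hl
      exact h (x :: l) (by simp [hl])
    · intro h l hl
      cases l with
      | nil => simp at hl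
      | cons x l =>
        exact (ih _).2 (h x) l (by simpa using hl)

theorem LC_mono {R : Type*} [Ring R] (n : ℕ) (r : R) (h : r ∈ LC R n) : r ∈ LC R (n + 1) := by
  induction n generalizing r with
  | zero =>
    have : r = 0 := h
    subst this
    exact zero_mem _
  | succ n ih => exact fun x => ih _ (h x)

theorem LC_mul {R : Type*} [Ring R] (n : ℕ) {z w : R} (hz : z ∈ LC R (n + 1))
    (hw : w ∈ LC R (n + 1)) : z * w ∈ LC R (n + 1) := by
  intro x
  have := add_mem (hz (w * x)) (hw (x * z))
  convert this using 1
  noncomm_ring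

theorem LC_one {R : Type*} [Ring R] (n : ℕ) : (1 : R) ∈ LC R (n + 1) := by
  intro x
  simp

/-- If `a`, `c` commute and `z ∈ Z_{n+1}` then `a [z, c] ∈ Z_n`. -/
theorem LC_key {R : Type*} [Ring R] (n : ℕ) (z a c : R) (hz : z ∈ LC R (n + 1))
    (hac : a * c = c * a) : a * (z * c - c * z) ∈ LC R n := by
  induction n generalizing z a c with
  | zero =>
    have : z * c - c * z = 0 := hz c
    rw [this, mul_zero]
    exact zero_mem _
  | succ n ih =>
    intro y
    have h1 := hz c (y * a)
    have h2 := hz (c * y) a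
    have h3 := ih (z * y - y * z) c a (hz y) hac.symm
    have key : a * (z * c - c * z) * y - y * (a * (z * c - c * z)) =
        ((z * c - c * z) * (y * a) - y * a * (z * c - c * z))
        - ((z * (c * y) - c * y * z) * a - a * (z * (c * y) - c * y * z))
        + c * ((z * y - y * z) * a - a * (z * y - y * z))
        + (a * c - c * a) * (y * z - z * y) := by
      noncomm_ring
    rw [key, hac, sub_self, zero_mul, add_zero]
    exact add_mem (sub_mem h1 h2) h3

theorem mem_span {R : Type*} [Ring R] (n : ℕ) (C : Submonoid R)
    (hC : ∀ a ∈ C, ∀ b ∈ C, a * b = b * a) (s : R)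
    (hs : s ∈ Subring.closure (lieCenter R (n + 1) ∪ (C : Set R))) :
    s ∈ AddSubgroup.closure {t : R | ∃ c ∈ C, ∃ z ∈ LC R (n + 1), t = c * z} := by
  induction hs using Subring.closure_induction with
  | mem x hx =>
    apply AddSubgroup.subset_closure
    rcases hx with hx | hx
    · exact ⟨1, C.one_mem, x, (mem_lieCenter_iff _ _).1 hx, by simp⟩
    · exact ⟨x, hx, 1, LC_one n, by simp⟩
  | zero => exact zero_mem _
  | one => exact AddSubgroup.subset_closure ⟨1, C.one_mem, 1, LC_one n, by simp⟩
  | add x y _ _ hx hy => exact add_mem hx hy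
  | neg x _ hx => exact neg_mem hx
  | mul x y hx0 hy0 hx hy =>
    clear hx0 hy0
    induction hx using AddSubgroup.closure_induction with
    | zero => simp
    | add a b _ _ ha hb => rw [add_mul]; exact add_mem ha hb
    | neg a _ ha => rw [neg_mul]; exact neg_mem ha
    | mem a ha =>
      induction hy using AddSubgroup.closure_induction with
      | zero => simp
      | add u v _ _ hu hv => rw [mul_add]; exact add_mem hu hv
      | neg u _ hu => rw [mul_neg]; exact neg_mem hu
      | mem b hb =>
        obtain ⟨c, hc, z, hz, rfl⟩ := ha
        obtain ⟨d, hd, w, hw, rfl⟩ := hb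
        have e : c * z * (d * w) = (c * d) * (z * w) + 1 * (c * (z * d - d * z) * w) := by
          noncomm_ring
        rw [e]
        refine add_mem (AddSubgroup.subset_closure ⟨_, C.mul_mem hc hd, _, LC_mul n hz hw, rfl⟩)
          (AddSubgroup.subset_closure ⟨_, C.one_mem, _, LC_mul n ?_ hw, rfl⟩)
        exact LC_mono _ _ (LC_key n z c d hz (hC c hc d hd))

theorem comm_mem {R : Type*} [Ring R] (n : ℕ) (C : Submonoid R)
    (hC : ∀ a ∈ C, ∀ b ∈ C, a * b = b * a) (s t : R)
    (hs : s ∈ Subring.closure (lieCenter R (n + 1) ∪ (C : Set R)))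
    (ht : t ∈ Subring.closure (lieCenter R (n + 1) ∪ (C : Set R))) :
    s * t - t * s ∈ LC R n := by
  have step : ∀ c ∈ C, ∀ u ∈ Subring.closure (lieCenter R (n + 1) ∪ (C : Set R)),
      u * c - c * u ∈ LC R n := by
    intro c hc u hu
    replace hu := mem_span n C hC u hu
    induction hu using AddSubgroup.closure_induction with
    | zero => simp
    | add a b _ _ ha hb =>
      convert add_mem ha hb using 1
      noncomm_ring
    | neg a _ ha =>
      convert neg_mem ha using 1
      noncomm_ring
    | mem a ha =>
      obtain ⟨d, hd, z, hz, rfl⟩ := ha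
      have e : d * z * c - c * (d * z) = d * (z * c - c * z) + (d * c - c * d) * z := by
        noncomm_ring
      rw [e, hC d hd c hc, sub_self, zero_mul, add_zero]
      exact LC_key n z d c hz (hC d hd c hc)
  replace hs := mem_span n C hC s hs
  induction hs using AddSubgroup.closure_induction with
  | zero => simp
  | add a b _ _ ha hb =>
    convert add_mem ha hb using 1
    noncomm_ring
  | neg a _ ha =>
    convert neg_mem ha using 1
    noncomm_ring
  | mem a ha =>
    obtain ⟨c, hc, z, hz, rfl⟩ := ha
    have h1 := step c hc (z * t) (mul_mem
      (Subring.subset_closure (Or.inl ((mem_lieCenter_iff _ _).2 hz))) ht)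
    have h2 := hz (t * c)
    convert sub_mem h2 h1 using 1
    noncomm_ring

theorem subring_gen_lieCenter_and_comm_monoid_lie_nilpotent {R : Type*} [Ring R]
    (n : ℕ) (hn : 1 ≤ n) (C : Submonoid R) (hC : ∀ a ∈ C, ∀ b ∈ C, a * b = b * a)
    (x : R) (l : List R)
    (hx : x ∈ Subring.closure (lieCenter R n ∪ (C : Set R)))
    (hl : ∀ y ∈ l, y ∈ Subring.closure (lieCenter R n ∪ (C : Set R)))
    (hlen : l.length = n) :
    lnc x l = 0 := by
  obtain ⟨n, rfl⟩ : ∃ m, n = m + 1 := ⟨n - 1, by omega⟩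
  cases l with
  | nil => simp at hlen
  | cons y l =>
    have h := comm_mem n C hC x y hx (hl y (by simp))
    exact (mem_lieCenter_iff _ _).2 h l (by simpa using hlen)
end
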